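/- arXiv:2403.06615 — 2 statements merged into one kernel-verified Lean document; each statement's English description precedes it below -/
import Mathlib

section
/- Let X,Y be independent random vectors on ℝ^m such that X+Y and X−Y are independent. Then X and Y are Gaussian (Bernstein's theorem). -/
open MeasureTheory ProbabilityTheory
open scoped RealInnerProductSpace NNReal

/-- A measure on `ℝᵐ` is Gaussian (possibly degenerate) if every one-dimensional linear
projection of it is a (possibly degenerate) Gaussian on `ℝ`. -/
def IsGaussianMeasure {m : ℕ} (ν : Measure (EuclideanSpace ℝ (Fin m))) : Prop :=
  ∀ u : EuclideanSpace ℝ (Fin m), ∃ (a : ℝ) (v : ℝ≥0),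
    ν.map (fun x => ⟪u, x⟫) = gaussianReal a v

/-!
Projecting along a linear form reduces the theorem to real random variables. Let `f` and `g` be the
characteristic functions of `X` and `Y`. Computing the characteristic function of
`(s + t) X + (s - t) Y = s (X + Y) + t (X - Y)` in two ways gives
`f (s + t) * g (s - t) = f s * g s * (f t * g (-t))`. Doubling shows that `|f| = |g|` and that `f`
has no zeros, so `f = exp φ` and `g = exp ψ` with `φ`, `ψ` continuous, and uniqueness of continuous
logarithms makes `ψ` Hermitian and turns the equation into
`φ (s + t) + ψ (s - t) = φ s + ψ s + φ t + ψ (-t)`. As `Re φ = Re ψ`, its real part is the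
parallelogram identity, so `Re φ` is quadratic; adding the imaginary parts at `(s, t)` and `(t, s)`
shows that `Im φ` is additive, hence linear. Thus `f` is a Gaussian characteristic function.
-/

open Complex Filter Topology
open scoped ComplexConjugate

section Parallelogram

variable {V : Type*} [AddCommGroup V] {q : V → ℝ}

lemma map_zero_of_parallelogram
    (h : ∀ x y, q (x + y) + q (x - y) = 2 * q x + 2 * q y) : q 0 = 0 := by
  have h00 := h 0 0
  rw [add_zero, sub_zero] at h00
  linarith

lemma map_neg_of_parallelogram
    (h : ∀ x y, q (x + y) + q (x - y) = 2 * q x + 2 * q y) (x : V) : q (-x) = q x := by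
  have h0x := h 0 x
  rw [zero_add, zero_sub, map_zero_of_parallelogram h] at h0x
  linarith

variable [Module ℝ V]

lemma map_natCast_smul_of_parallelogram
    (h : ∀ x y, q (x + y) + q (x - y) = 2 * q x + 2 * q y) (n : ℕ) (x : V) :
    q ((n : ℝ) • x) = (n : ℝ) ^ 2 * q x := by
  induction n using Nat.twoStepInduction with
  | zero => simp [map_zero_of_parallelogram h]
  | one => simp
  | more n ih ih_succ =>
    have hstep := h (((n + 1 : ℕ) : ℝ) • x) x
    rw [show ((n + 1 : ℕ) : ℝ) • x + x = ((n + 2 : ℕ) : ℝ) • x by push_cast; module,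
      show ((n + 1 : ℕ) : ℝ) • x - x = (n : ℝ) • x by push_cast; module, ih, ih_succ] at hstep
    push_cast at hstep ⊢
    linarith

lemma map_intCast_smul_of_parallelogram
    (h : ∀ x y, q (x + y) + q (x - y) = 2 * q x + 2 * q y) (n : ℤ) (x : V) :
    q ((n : ℝ) • x) = (n : ℝ) ^ 2 * q x := by
  obtain ⟨k, rfl | rfl⟩ := n.eq_nat_or_neg
  · simpa using map_natCast_smul_of_parallelogram h k x
  · simpa [map_neg_of_parallelogram h] using map_natCast_smul_of_parallelogram h k x

lemma map_ratCast_smul_of_parallelogram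
    (h : ∀ x y, q (x + y) + q (x - y) = 2 * q x + 2 * q y) (r : ℚ) (x : V) :
    q ((r : ℝ) • x) = (r : ℝ) ^ 2 * q x := by
  have hden : (r.den : ℝ) ≠ 0 := by exact_mod_cast r.den_ne_zero
  have hr : (r.den : ℝ) * r = r.num := by exact_mod_cast Rat.den_mul_eq_num r
  apply mul_left_cancel₀ (pow_ne_zero 2 hden)
  rw [← map_natCast_smul_of_parallelogram h, smul_smul, hr, map_intCast_smul_of_parallelogram h,
    ← hr]
  ring

lemma map_real_smul_of_parallelogram [TopologicalSpace V] [ContinuousSMul ℝ V] (hq : Continuous q)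
    (h : ∀ x y, q (x + y) + q (x - y) = 2 * q x + 2 * q y) (r : ℝ) (x : V) :
    q (r • x) = r ^ 2 * q x := by
  suffices (fun r : ℝ ↦ q (r • x)) = fun r ↦ r ^ 2 * q x from congrFun this r
  exact Rat.isDenseEmbedding_coe_real.dense.equalizer (by fun_prop) (by fun_prop)
    (funext fun r ↦ map_ratCast_smul_of_parallelogram h r x)

end Parallelogram

section ContinuousLogarithm

lemma eq_of_exp_comp_eq {A : Type*} [TopologicalSpace A] [PreconnectedSpace A] {φ ψ : A → ℂ}
    (hφ : Continuous φ) (hψ : Continuous ψ) (hexp : ∀ a, exp (φ a) = exp (ψ a))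
    {a₀ : A} (ha₀ : φ a₀ = ψ a₀) : φ = ψ :=
  isCoveringMap_exp.eq_of_comp_eq hφ hψ (funext fun a ↦ Subtype.ext (hexp a)) a₀ ha₀

variable {V : Type*} [AddCommGroup V] [Module ℝ V] [TopologicalSpace V] [IsTopologicalAddGroup V]
  [ContinuousSMul ℝ V] [LocallyConvexSpace ℝ V]

lemma exists_hermitian_log {f : V → ℂ} (hf : Continuous f) (hf_ne : ∀ x, f x ≠ 0)
    (hf_zero : f 0 = 1) (hf_neg : ∀ x, f (-x) = conj (f x)) :
    ∃ φ : V → ℂ, Continuous φ ∧ φ 0 = 0 ∧ (∀ x, φ (-x) = conj (φ x)) ∧ ∀ x, f x = exp (φ x) := by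
  obtain ⟨φ, ⟨hφ_zero, hφ_exp⟩, -⟩ := isCoveringMapOn_exp.existsUnique_continuousMap_lifts
    (f := ⟨f, hf⟩) (a₀ := 0) (e₀ := 0) (by simp [hf_zero]) hf_ne
  have hφ_exp (x : V) : exp (φ x) = f x := congrFun hφ_exp x
  have hφ_neg : (fun x ↦ φ (-x)) = fun x ↦ conj (φ x) :=
    eq_of_exp_comp_eq (by fun_prop) (by fun_prop)
      (fun x ↦ by rw [exp_conj, hφ_exp, hφ_exp, hf_neg]) (a₀ := 0) (by simp [hφ_zero])
  exact ⟨φ, φ.continuous, hφ_zero, congrFun hφ_neg, fun x ↦ (hφ_exp x).symm⟩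

end ContinuousLogarithm

/-- Bernstein's functional equation for a pair of functions, together with the properties of
characteristic functions of probability measures that determine its solutions. -/
structure IsBernsteinPair {V : Type*} [AddCommGroup V] [TopologicalSpace V] (f g : V → ℂ) :
    Prop where
  continuous_left : Continuous f
  continuous_right : Continuous g
  left_zero : f 0 = 1
  right_zero : g 0 = 1
  left_neg : ∀ x, f (-x) = conj (f x)
  right_neg : ∀ x, g (-x) = conj (g x)
  left_add_mul_right_sub : ∀ x y, f (x + y) * g (x - y) = f x * g x * (f y * g (-y))

namespace IsBernsteinPair

section AddCommGroup

variable {V : Type*} [AddCommGroup V] [TopologicalSpace V] {f g : V → ℂ}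

lemma symm (h : IsBernsteinPair f g) : IsBernsteinPair g f where
  continuous_left := h.continuous_right
  continuous_right := h.continuous_left
  left_zero := h.right_zero
  right_zero := h.left_zero
  left_neg := h.right_neg
  right_neg := h.left_neg
  left_add_mul_right_sub x y := by
    have hxy := h.left_add_mul_right_sub x (-y)
    rw [neg_neg, sub_neg_eq_add, ← sub_eq_add_neg] at hxy
    linear_combination hxy

lemma norm_left_add_self (h : IsBernsteinPair f g) (x : V) :
    ‖f (x + x)‖ = ‖f x‖ ^ 2 * ‖g x‖ ^ 2 := by
  have hxx := congrArg norm (h.left_add_mul_right_sub x x)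
  rw [sub_self, h.right_zero, mul_one, h.right_neg] at hxx
  simp only [norm_mul, RCLike.norm_conj] at hxx
  linear_combination hxx

end AddCommGroup

section Module

variable {V : Type*} [AddCommGroup V] [Module ℝ V] [TopologicalSpace V] {f g : V → ℂ}

lemma norm_left_eq_norm_right (h : IsBernsteinPair f g) (x : V) : ‖f x‖ = ‖g x‖ := by
  obtain ⟨y, rfl⟩ : ∃ y, y + y = x := ⟨(2⁻¹ : ℝ) • x, by module⟩
  rw [h.norm_left_add_self, h.symm.norm_left_add_self, mul_comm]

lemma left_inv_two_smul_eq_zero (h : IsBernsteinPair f g) {x : V} (hx : f x = 0) :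
    f ((2⁻¹ : ℝ) • x) = 0 := by
  have hdouble := h.norm_left_add_self ((2⁻¹ : ℝ) • x)
  rw [show (2⁻¹ : ℝ) • x + (2⁻¹ : ℝ) • x = x by module, hx, ← h.norm_left_eq_norm_right] at hdouble
  simpa using hdouble.symm

lemma left_ne_zero [ContinuousSMul ℝ V] (h : IsBernsteinPair f g) (x : V) : f x ≠ 0 := by
  intro hx
  have hzeros (n : ℕ) : f ((2⁻¹ : ℝ) ^ n • x) = 0 := by
    induction n with
    | zero => simpa using hx
    | succ n ih => rw [pow_succ', mul_smul]; exact h.left_inv_two_smul_eq_zero ih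
  have hpoints : Tendsto (fun n : ℕ ↦ (2⁻¹ : ℝ) ^ n • x) atTop (𝓝 0) := by
    have hpow : Tendsto (fun n : ℕ ↦ (2⁻¹ : ℝ) ^ n) atTop (𝓝 0) :=
      tendsto_pow_atTop_nhds_zero_of_lt_one (by norm_num) (by norm_num)
    simpa using hpow.smul_const x
  have hlim : Tendsto (fun n : ℕ ↦ f ((2⁻¹ : ℝ) ^ n • x)) atTop (𝓝 (f 0)) :=
    (h.continuous_left.tendsto 0).comp hpoints
  simp only [hzeros, h.left_zero] at hlim
  exact zero_ne_one (tendsto_nhds_unique tendsto_const_nhds hlim)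

end Module

section LocallyConvex

variable {V : Type*} [AddCommGroup V] [Module ℝ V] [TopologicalSpace V] [IsTopologicalAddGroup V]
  [ContinuousSMul ℝ V] [LocallyConvexSpace ℝ V] {f g : V → ℂ}

lemma exists_log (h : IsBernsteinPair f g) :
    ∃ φ ψ : V → ℂ, Continuous φ ∧ (∀ x, ψ (-x) = conj (ψ x)) ∧
      (∀ x, f x = exp (φ x)) ∧ (∀ x, g x = exp (ψ x)) ∧
      ∀ x y, φ (x + y) + ψ (x - y) = φ x + ψ x + (φ y + ψ (-y)) := by
  obtain ⟨φ, hφ, hφ_zero, -, hfφ⟩ :=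
    exists_hermitian_log h.continuous_left h.left_ne_zero h.left_zero h.left_neg
  obtain ⟨ψ, hψ, hψ_zero, hψ_neg, hgψ⟩ :=
    exists_hermitian_log h.continuous_right h.symm.left_ne_zero h.right_zero h.right_neg
  have heq : (fun p : V × V ↦ φ (p.1 + p.2) + ψ (p.1 - p.2)) =
      fun p ↦ φ p.1 + ψ p.1 + (φ p.2 + ψ (-p.2)) :=
    eq_of_exp_comp_eq (by fun_prop) (by fun_prop)
      (fun p ↦ by simpa only [exp_add, ← hfφ, ← hgψ] using h.left_add_mul_right_sub p.1 p.2)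
      (a₀ := 0) (by simp [hφ_zero, hψ_zero])
  exact ⟨φ, ψ, hφ, hψ_neg, hfφ, hgψ, fun x y ↦ congrFun heq (x, y)⟩

theorem exists_left_eq_exp (h : IsBernsteinPair f g) :
    ∃ (ℓ : V →L[ℝ] ℝ) (q : V → ℝ), (∀ (r : ℝ) x, q (r • x) = r ^ 2 * q x) ∧
      ∀ x, f x = exp (q x + ℓ x * I) := by
  obtain ⟨φ, ψ, hφ, hψ_neg, hfφ, hgψ, hlog⟩ := h.exists_log
  have hre_eq (x : V) : (φ x).re = (ψ x).re := by
    simpa [hfφ, hgψ, norm_exp] using h.norm_left_eq_norm_right x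
  have hre (x y : V) :
      (φ (x + y)).re + (φ (x - y)).re = 2 * (φ x).re + 2 * (φ y).re := by
    have hxy := congrArg re (hlog x y)
    simp only [add_re, hψ_neg, conj_re, ← hre_eq] at hxy
    linarith
  have him (x y : V) : (φ (x + y)).im = (φ x).im + (φ y).im := by
    have hxy := congrArg im (hlog x y)
    have hyx := congrArg im (hlog y x)
    rw [add_comm y x, ← neg_sub x y] at hyx
    simp only [add_im, hψ_neg, conj_im] at hxy hyx
    linarith
  refine ⟨(AddMonoidHom.mk' (fun x ↦ (φ x).im) him).toRealLinearMap (continuous_im.comp hφ),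
    fun x ↦ (φ x).re, map_real_smul_of_parallelogram (continuous_re.comp hφ) hre, fun x ↦ ?_⟩
  rw [hfφ]
  exact congrArg exp (re_add_im (φ x)).symm

end LocallyConvex

end IsBernsteinPair

lemma isGaussian_of_charFun_eq_exp {ν : Measure ℝ} [IsFiniteMeasure ν] {a c : ℝ}
    (h : ∀ t : ℝ, charFun ν t = exp (c * t ^ 2 + a * t * I)) : IsGaussian ν := by
  have hmass : ν.real Set.univ = 1 := by
    have h0 := h 0
    simp only [charFun_zero, ofReal_zero, ne_eq, OfNat.ofNat_ne_zero, not_false_eq_true, zero_pow,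
      mul_zero, zero_mul, add_zero, exp_zero] at h0
    exact_mod_cast h0
  have hc : c ≤ 0 := by
    have hle := norm_charFun_le (μ := ν) 1
    rw [h 1, norm_exp, hmass] at hle
    simpa using hle
  suffices ν = gaussianReal a (-2 * c).toNNReal by rw [this]; infer_instance
  refine Measure.ext_of_charFun (funext fun t ↦ ?_)
  rw [h, charFun_gaussianReal, Real.coe_toNNReal _ (by linarith)]
  congr 1
  push_cast
  ring

lemma isGaussian_of_isBernsteinPair_charFun {ν : Measure ℝ} [IsFiniteMeasure ν] {g : ℝ → ℂ}
    (h : IsBernsteinPair (charFun ν) g) : IsGaussian ν := by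
  obtain ⟨ℓ, q, hq, hexp⟩ := h.exists_left_eq_exp
  refine isGaussian_of_charFun_eq_exp (a := ℓ 1) (c := q 1) fun t ↦ ?_
  have hqt : q t = t ^ 2 * q 1 := by simpa using hq t 1
  have hℓt : ℓ t = t * ℓ 1 := by simpa using ℓ.map_smul t 1
  rw [hexp, hqt, hℓt]
  push_cast
  ring_nf

section Probability

variable {Ω : Type*} [MeasurableSpace Ω] {μ : Measure Ω}

lemma charFun_map_smul_add_smul {E : Type*} [NormedAddCommGroup E] [InnerProductSpace ℝ E]
    [MeasurableSpace E] [BorelSpace E] [SecondCountableTopology E] [IsFiniteMeasure μ]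
    {X Y : Ω → E} (hX : AEMeasurable X μ) (hY : AEMeasurable Y μ) (hXY : IndepFun X Y μ)
    (a b : ℝ) (t : E) :
    charFun (μ.map fun ω ↦ a • X ω + b • Y ω) t =
      charFun (μ.map X) (a • t) * charFun (μ.map Y) (b • t) := by
  have hindep : IndepFun (fun ω ↦ a • X ω) (fun ω ↦ b • Y ω) μ :=
    hXY.comp (measurable_const_smul a) (measurable_const_smul b)
  rw [hindep.charFun_map_fun_add_eq_mul (by fun_prop) (by fun_prop), Pi.mul_apply,
    charFun_map_smul_comp hX, charFun_map_smul_comp hY]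

variable [IsProbabilityMeasure μ]

lemma isBernsteinPair_charFun {X Y : Ω → ℝ} (hX : AEMeasurable X μ) (hY : AEMeasurable Y μ)
    (hXY : IndepFun X Y μ) (hadd_sub : IndepFun (X + Y) (X - Y) μ) :
    IsBernsteinPair (charFun (μ.map X)) (charFun (μ.map Y)) := by
  have := Measure.isProbabilityMeasure_map hX
  have := Measure.isProbabilityMeasure_map hY
  have hlin (a b : ℝ) : charFun (μ.map X) a * charFun (μ.map Y) b =
      charFun (μ.map fun ω ↦ a * X ω + b * Y ω) 1 := by
    simpa using (charFun_map_smul_add_smul hX hY hXY a b 1).symm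
  have hadd (s : ℝ) : charFun (μ.map X) s * charFun (μ.map Y) s = charFun (μ.map (X + Y)) s :=
    (congrFun (hXY.charFun_map_add_eq_mul hX hY) s).symm
  have hsub (t : ℝ) :
      charFun (μ.map X) t * charFun (μ.map Y) (-t) = charFun (μ.map (X - Y)) t := by
    simpa [← sub_eq_add_neg, Pi.sub_def] using (charFun_map_smul_add_smul hX hY hXY 1 (-1) t).symm
  refine ⟨by fun_prop, by fun_prop, by simp, by simp, charFun_neg, charFun_neg, fun s t ↦ ?_⟩
  calc charFun (μ.map X) (s + t) * charFun (μ.map Y) (s - t)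
      = charFun (μ.map fun ω ↦ (s + t) * X ω + (s - t) * Y ω) 1 := hlin _ _
    _ = charFun (μ.map fun ω ↦ s • (X + Y) ω + t • (X - Y) ω) 1 := by
        congr 2 with ω
        simp only [Pi.add_apply, Pi.sub_apply, smul_eq_mul]
        ring
    _ = charFun (μ.map (X + Y)) s * charFun (μ.map (X - Y)) t := by
        simpa using charFun_map_smul_add_smul (hX.add hY) (hX.sub hY) hadd_sub s t 1
    _ = charFun (μ.map X) s * charFun (μ.map Y) s *
          (charFun (μ.map X) t * charFun (μ.map Y) (-t)) := by rw [hadd, hsub]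

theorem bernstein_theorem_general {E : Type*} [AddCommGroup E] [Module ℝ E] [TopologicalSpace E]
    [MeasurableSpace E] [OpensMeasurableSpace E] {X Y : Ω → E}
    (hX : AEMeasurable X μ) (hY : AEMeasurable Y μ) (hXY : IndepFun X Y μ)
    (hadd_sub : IndepFun (X + Y) (X - Y) μ) :
    IsGaussian (μ.map X) ∧ IsGaussian (μ.map Y) := by
  have hL (L : E →L[ℝ] ℝ) : Measurable L := L.continuous.measurable
  have hpair (L : E →L[ℝ] ℝ) :
      IsBernsteinPair (charFun (μ.map (L ∘ X))) (charFun (μ.map (L ∘ Y))) :=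
    isBernsteinPair_charFun ((hL L).comp_aemeasurable hX) ((hL L).comp_aemeasurable hY)
      (hXY.comp (hL L) (hL L)) <| by
        convert hadd_sub.comp (hL L) (hL L) using 1 <;> ext ω <;> simp
  constructor <;> refine isGaussian_of_isGaussian_map fun L ↦ ?_
  · rw [AEMeasurable.map_map_of_aemeasurable (hL L).aemeasurable hX]
    exact isGaussian_of_isBernsteinPair_charFun (hpair L)
  · rw [AEMeasurable.map_map_of_aemeasurable (hL L).aemeasurable hY]
    exact isGaussian_of_isBernsteinPair_charFun (hpair L).symm

end Probability

lemma isGaussianMeasure_of_isGaussian {m : ℕ} {ν : Measure (EuclideanSpace ℝ (Fin m))}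
    (h : IsGaussian ν) : IsGaussianMeasure ν :=
  fun u ↦ ⟨_, _, h.map_eq_gaussianReal (innerSL ℝ u)⟩

/-- Bernstein's theorem: If `X, Y` are independent random vectors on `ℝᵐ`
such that `X+Y` and `X−Y` are independent, then `X` and `Y` are Gaussian. -/
theorem bernstein_theorem {m : ℕ} {Ω : Type*} [MeasurableSpace Ω]
    (μ : Measure Ω) [IsProbabilityMeasure μ]
    (X Y : Ω → EuclideanSpace ℝ (Fin m)) (hX : Measurable X) (hY : Measurable Y)
    (hXY : IndepFun X Y μ)
    (hsum : IndepFun (X + Y) (X - Y) μ) :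
    IsGaussianMeasure (μ.map X) ∧ IsGaussianMeasure (μ.map Y) :=
  (bernstein_theorem_general hX.aemeasurable hY.aemeasurable hXY hsum).imp
    isGaussianMeasure_of_isGaussian isGaussianMeasure_of_isGaussian
end

section
/- Let Q be a probability measure, f a bounded measurable function with ∫ f dQ = 0, and ε small enough that 1 + εf ≥ 0. Define dP = (1+εf) dQ. Then D(P‖Q) = (ε²/2)·Var_Q(f) + R(ε), where the remainder satisfies |R(ε)| ≤ (ε‖f‖_∞)³ / (6(1 − ε‖f‖_∞)²) for ε‖f‖_∞ < 1. -/
open MeasureTheory ProbabilityTheory Real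
open scoped Classical

/-- Relative entropy `D(P‖Q) = ∫ log(dP/dQ) dP` if `P ≪ Q` (and the integral exists),
and `+∞` otherwise. -/
noncomputable def relEnt {α : Type*} [MeasurableSpace α] (P Q : Measure α) : EReal :=
  if P ≪ Q ∧ Integrable (llr P Q) P then ((∫ x, llr P Q x ∂P : ℝ) : EReal) else ⊤

/-!
Writing `h = ε f` and `klFun t = t log t + 1 - t`, one has `D(P‖Q) = ∫ h dQ + ∫ klFun (1 + h) dQ`.
The logarithm series gives `klFun (1 + h) = ∑ₙ (-h) ^ (n + 2) / ((n + 1) (n + 2))`, whose leading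
term `h² / 2` integrates to the variance term. Past it every denominator is at least `6`, so the
geometric series bounds the remainder by `|h|³ / (6 (1 - |h|))`.
-/

open InformationTheory

section KLFun

variable {x u : ℝ}

theorem hasSum_klFun_one_add (hx : |x| < 1) :
    HasSum (fun n : ℕ => (-x) ^ (n + 2) / ((n + 1) * (n + 2))) (klFun (1 + x)) := by
  have log_series : HasSum (fun n : ℕ => (-x) ^ (n + 1) / (n + 1)) (-log (1 + x)) := by
    simpa using hasSum_pow_div_log_of_abs_lt_one (x := -x) (by rwa [abs_neg])
  have log_series_tail :
      HasSum (fun n : ℕ => (-x) ^ (n + 2) / (n + 2)) (-log (1 + x) + x) := by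
    simpa [add_assoc, one_add_one_eq_two] using (hasSum_nat_add_iff' 1).mpr log_series
  convert! (log_series.mul_left (-x)).sub log_series_tail using 1
  · ext n
    field_simp
    ring
  · rw [klFun_apply]
    ring

theorem abs_klFun_one_add_sub_sq_div_two_le (hx : |x| < 1) :
    |klFun (1 + x) - x ^ 2 / 2| ≤ |x| ^ 3 / (6 * (1 - |x|)) := by
  have remainder_series :
      HasSum (fun n : ℕ => (-x) ^ (n + 3) / ((n + 2) * (n + 3))) (klFun (1 + x) - x ^ 2 / 2) := by
    convert! (hasSum_nat_add_iff' 1).mpr (hasSum_klFun_one_add hx) using 1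
    · ext n
      push_cast
      ring
    · simp
  have geometric_series :
      HasSum (fun n : ℕ => |x| ^ 3 / 6 * |x| ^ n) (|x| ^ 3 / (6 * (1 - |x|))) := by
    rw [← div_div, div_eq_mul_inv (|x| ^ 3 / 6)]
    exact (hasSum_geometric_of_lt_one (abs_nonneg x) hx).mul_left (|x| ^ 3 / 6)
  refine remainder_series.norm_le_of_bounded geometric_series fun n => ?_
  calc ‖(-x) ^ (n + 3) / (((n : ℝ) + 2) * (n + 3))‖
      = |x| ^ (n + 3) / (((n : ℝ) + 2) * (n + 3)) := by
        rw [norm_div, norm_pow, norm_neg, norm_eq_abs, norm_of_nonneg (by positivity)]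
    _ ≤ |x| ^ (n + 3) / 6 := by
        gcongr
        nlinarith [n.cast_nonneg (α := ℝ)]
    _ = |x| ^ 3 / 6 * |x| ^ n := by ring

theorem abs_klFun_one_add_sub_sq_div_two_le_of_abs_le (hxu : |x| ≤ u) (hu : u < 1) :
    |klFun (1 + x) - x ^ 2 / 2| ≤ u ^ 3 / (6 * (1 - u)) := by
  have u_nonneg : 0 ≤ u := (abs_nonneg x).trans hxu
  calc |klFun (1 + x) - x ^ 2 / 2|
      ≤ |x| ^ 3 / (6 * (1 - |x|)) := abs_klFun_one_add_sub_sq_div_two_le (hxu.trans_lt hu)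
    _ ≤ u ^ 3 / (6 * (1 - u)) := by gcongr

end KLFun

section RelEnt

variable {α : Type*} [MeasurableSpace α] {Q : Measure α}

theorem relEnt_withDensity_ofReal [SigmaFinite Q] {g : α → ℝ} (hg : AEMeasurable g Q)
    (hg_nonneg : 0 ≤ᵐ[Q] g) (hg_int : Integrable (fun x => g x * log (g x)) Q) :
    relEnt (Q.withDensity fun x => ENNReal.ofReal (g x)) Q
      = ((∫ x, g x * log (g x) ∂Q : ℝ) : EReal) := by
  set P := Q.withDensity fun x => ENNReal.ofReal (g x)
  have hPQ : P ≪ Q := withDensity_absolutelyContinuous _ _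
  have : SigmaFinite P := SigmaFinite.withDensity_ofReal g
  have rnDeriv_eq : (fun x => (P.rnDeriv Q x).toReal) =ᵐ[Q] g := by
    filter_upwards [Q.rnDeriv_withDensity₀ hg.ennreal_ofReal, hg_nonneg] with x hx hgx
    rw [hx, ENNReal.toReal_ofReal hgx]
  have mul_log_eq : (fun x => (P.rnDeriv Q x).toReal * log (P.rnDeriv Q x).toReal)
      =ᵐ[Q] fun x => g x * log (g x) := by
    filter_upwards [rnDeriv_eq] with x hx
    rw [hx]
  have hllr : Integrable (llr P Q) P :=
    (integrable_rnDeriv_mul_log_iff hPQ).mp (hg_int.congr mul_log_eq.symm)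
  rw [relEnt, if_pos ⟨hPQ, hllr⟩, ← integral_rnDeriv_mul_log hPQ, integral_congr_ae mul_log_eq]

theorem relEnt_withDensity_one_add [SigmaFinite Q] {h : α → ℝ} (hh : Integrable h Q)
    (hh_nonneg : ∀ᵐ x ∂Q, 0 ≤ 1 + h x) (hkl : Integrable (fun x => klFun (1 + h x)) Q) :
    relEnt (Q.withDensity fun x => ENNReal.ofReal (1 + h x)) Q
      = ((∫ x, h x ∂Q + ∫ x, klFun (1 + h x) ∂Q : ℝ) : EReal) := by
  have mul_log_eq : (fun x => (1 + h x) * log (1 + h x)) = fun x => h x + klFun (1 + h x) := by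
    ext x
    rw [klFun_apply]
    ring
  rw [relEnt_withDensity_ofReal (hh.aemeasurable.const_add 1) hh_nonneg
    (mul_log_eq ▸ hh.add hkl), mul_log_eq, integral_add hh hkl]

theorem relEnt_perturbation_expansion_general [IsFiniteMeasure Q] {f : α → ℝ}
    (hf : AEMeasurable f Q) {B : ℝ} (hB : ∀ᵐ x ∂Q, |f x| ≤ B) {ε : ℝ} (hε : |ε| * B < 1) :
    ∃ R : ℝ,
      relEnt (Q.withDensity fun x => ENNReal.ofReal (1 + ε * f x)) Q
          = ((ε * ∫ x, f x ∂Q + ε ^ 2 / 2 * ∫ x, f x ^ 2 ∂Q + R : ℝ) : EReal) ∧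
      |R| ≤ (|ε| * B) ^ 3 / (6 * (1 - |ε| * B)) * Q.real Set.univ := by
  have abs_le : ∀ᵐ x ∂Q, |ε * f x| ≤ |ε| * B := by
    filter_upwards [hB] with x hx
    rw [abs_mul]
    gcongr
  have remainder_le : ∀ᵐ x ∂Q, ‖klFun (1 + ε * f x) - (ε * f x) ^ 2 / 2‖
      ≤ (|ε| * B) ^ 3 / (6 * (1 - |ε| * B)) := by
    filter_upwards [abs_le] with x hx
    exact abs_klFun_one_add_sub_sq_div_two_le_of_abs_le hx hε
  have hf_memLp (p : ENNReal) : MemLp f p Q := .of_bound hf.aestronglyMeasurable B hB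
  have linear_int : Integrable (fun x => ε * f x) Q :=
    ((hf_memLp 1).integrable le_rfl).const_mul ε
  have quadratic_int : Integrable (fun x => (ε * f x) ^ 2 / 2) Q :=
    ((hf_memLp 2).const_mul ε).integrable_sq.div_const 2
  have kl_meas : AEMeasurable (fun x => klFun (1 + ε * f x)) Q := by fun_prop
  have remainder_int : Integrable (fun x => klFun (1 + ε * f x) - (ε * f x) ^ 2 / 2) Q :=
    .of_bound (kl_meas.aestronglyMeasurable.sub quadratic_int.1) _ remainder_le
  have kl_int : Integrable (fun x => klFun (1 + ε * f x)) Q := by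
    simpa [Pi.add_def] using remainder_int.add quadratic_int
  have density_nonneg : ∀ᵐ x ∂Q, 0 ≤ 1 + ε * f x := by
    filter_upwards [abs_le] with x hx
    linarith [neg_le_of_abs_le hx]
  refine ⟨∫ x, (klFun (1 + ε * f x) - (ε * f x) ^ 2 / 2) ∂Q, ?_,
    norm_integral_le_of_norm_le_const remainder_le⟩
  rw [relEnt_withDensity_one_add linear_int density_nonneg kl_int,
    integral_sub kl_int quadratic_int]
  simp only [mul_pow, integral_div, integral_const_mul]
  ring_nf

end RelEnt

/-- For `dP = (1 + εf) dQ` with `f` bounded, `∫ f dQ = 0` and `ε‖f‖_∞ < 1`,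
`D(P‖Q) = (ε²/2) Var_Q(f) + R(ε)` with `|R(ε)| ≤ (ε‖f‖_∞)³ / (6 (1 − ε‖f‖_∞)²)`. -/
theorem relEnt_perturbation_expansion {α : Type*} [MeasurableSpace α]
    (Q : Measure α) [IsProbabilityMeasure Q]
    (f : α → ℝ) (hf : Measurable f) (B : ℝ) (hB : ∀ x, |f x| ≤ B)
    (hmean : ∫ x, f x ∂Q = 0)
    (ε : ℝ) (hε : |ε| * B < 1) (hpos : ∀ x, 0 ≤ 1 + ε * f x) :
    ∃ R : ℝ,
      relEnt (Q.withDensity (fun x => ENNReal.ofReal (1 + ε * f x))) Q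
          = ((ε ^ 2 / 2 * variance f Q + R : ℝ) : EReal) ∧
      |R| ≤ (|ε| * B) ^ 3 / (6 * (1 - |ε| * B) ^ 2) := by
  obtain ⟨R, hD, hR⟩ :=
    relEnt_perturbation_expansion_general hf.aemeasurable (ae_of_all Q hB) hε
  obtain ⟨x⟩ := Q.nonempty_of_neZero
  have hB_nonneg : 0 ≤ B := (abs_nonneg (f x)).trans (hB x)
  have one_sub_pos : 0 < 1 - |ε| * B := sub_pos.mpr hε
  refine ⟨R, by simpa [hmean, variance_of_integral_eq_zero hf.aemeasurable hmean] using hD, ?_⟩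
  calc |R| ≤ (|ε| * B) ^ 3 / (6 * (1 - |ε| * B)) := by simpa using hR
    _ ≤ (|ε| * B) ^ 3 / (6 * (1 - |ε| * B) ^ 2) := by
      gcongr
      exact pow_le_of_le_one one_sub_pos.le (sub_le_self 1 (by positivity)) two_ne_zero
end
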